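/- Let α = (X_g, α_g)_{g∈G} be a transitive partial action of a groupoid G on a set X, let x ∈ X, and suppose the global action β = (Y_g, β_g)_{g∈G} of G on Y is a globalization of α (with X ⊆ Y and i the inclusion). Then the map φ : H̄^x → Y defined by φ(h̄) = β_h(x) is well defined, bijective, and is an isomorphism of partial actions between the left-translation action δ of G on H̄^x and β. -/

import Mathlib

universe u v w

/-- A groupoid as an algebraic structure: a set `G` with a (totalized) partially
defined multiplication, inversion, source `d` and range `r`.  The product `mul g h`
is only meaningful when `d g = r h`. -/
structure SetGroupoid (G : Type u) where
  mul : G → G → G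
  inv : G → G
  d : G → G
  r : G → G
  inv_inv : ∀ g, inv (inv g) = g
  d_inv : ∀ g, d (inv g) = r g
  r_inv : ∀ g, r (inv g) = d g
  mul_d_self : ∀ g, mul g (d g) = g
  r_mul_self : ∀ g, mul (r g) g = g
  inv_mul : ∀ g, mul (inv g) g = d g
  mul_inv : ∀ g, mul g (inv g) = r g
  d_mul : ∀ g h, d g = r h → d (mul g h) = d h
  r_mul : ∀ g h, d g = r h → r (mul g h) = r g
  mul_assoc : ∀ g h k, d g = r h → d h = r k → mul (mul g h) k = mul g (mul h k)
  d_idem : ∀ g, d (d g) = d g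
  r_d : ∀ g, r (d g) = d g

/-- A (set theoretical) partial action of a groupoid `G` on a set `X`:
subsets `D g = X_g` and (totalized) bijections `act g : X_{g⁻¹} → X_g`, together with
the anchor map sending `x` to the unique identity `e` with `x ∈ X_e`. -/
structure PartialAction {G : Type u} (𝒢 : SetGroupoid G) (X : Type v) where
  D : G → Set X
  act : G → X → X
  anchor : X → G
  anchor_isUnit : ∀ x, 𝒢.d (anchor x) = anchor x
  mem_anchor : ∀ x, x ∈ D (anchor x)
  anchor_unique : ∀ x e, 𝒢.d e = e → x ∈ D e → e = anchor x
  D_subset : ∀ g, D g ⊆ D (𝒢.r g)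
  act_unit : ∀ e, 𝒢.d e = e → ∀ x ∈ D e, act e x = x
  act_mem : ∀ g, ∀ x ∈ D (𝒢.inv g), act g x ∈ D g
  act_act : ∀ g, ∀ x ∈ D (𝒢.inv g), act (𝒢.inv g) (act g x) = x
  act_comp_mem : ∀ g h, 𝒢.d g = 𝒢.r h → ∀ x, x ∈ D (𝒢.inv g) → x ∈ D h →
      act g x ∈ D (𝒢.mul g h)
  act_comp : ∀ g h, 𝒢.d g = 𝒢.r h → ∀ x, x ∈ D (𝒢.inv h) → act h x ∈ D (𝒢.inv g) →
      act g (act h x) = act (𝒢.mul g h) x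

namespace PartialAction

variable {G : Type u} {X : Type v} {𝒢 : SetGroupoid G}

/-- A partial action is global if `α_{gh} = α_g ∘ α_h` (as partial maps, including
equality of domains) for every composable pair `(g,h) ∈ G²`. -/
def IsGlobal (α : PartialAction 𝒢 X) : Prop :=
  ∀ g h, 𝒢.d g = 𝒢.r h →
    ((∀ x, x ∈ α.D (𝒢.inv (𝒢.mul g h)) ↔ x ∈ α.D (𝒢.inv h) ∧ α.act h x ∈ α.D (𝒢.inv g)) ∧
      ∀ x ∈ α.D (𝒢.inv (𝒢.mul g h)), α.act (𝒢.mul g h) x = α.act g (α.act h x))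

/-- Transitivity: some point has orbit equal to all of `X`. -/
def Transitive (α : PartialAction 𝒢 X) : Prop :=
  ∃ x : X, ∀ y : X, ∃ g, x ∈ α.D (𝒢.inv g) ∧ y = α.act g x

/-- Freeness: every stabilizer reduces to the anchor identity. -/
def Free (α : PartialAction 𝒢 X) : Prop :=
  ∀ (x : X) (g : G), x ∈ α.D (𝒢.inv g) → α.act g x = x → g = α.anchor x

end PartialAction

/-- `β` (a global action of `G` on `Y`) is a globalization of the partial action `α`
of `G` on `X`, via the injection `i : X → Y`. -/
structure IsGlobalization {G : Type u} {X : Type v} {Y : Type w} {𝒢 : SetGroupoid G}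
    (α : PartialAction 𝒢 X) (β : PartialAction 𝒢 Y) (i : X → Y) : Prop where
  global : β.IsGlobal
  inj : Function.Injective i
  cond_i : ∀ g, i '' α.D g = Set.range i ∩ β.act g '' (Set.range i ∩ β.D (𝒢.inv g))
  cond_ii : ∀ g, ∀ x ∈ α.D (𝒢.inv g), β.act g (i x) = i (α.act g x)
  cond_iii : ∀ g, β.D g = ⋃ h ∈ {h : G | 𝒢.r h = 𝒢.r g}, β.act h '' (i '' α.D (𝒢.d h))

/-!
In a global action the points of `Y_g` are exactly those anchored at `r g`, so the action of a
groupoid element depends only on anchors and the orbit-stabilizer argument for groups applies: two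
elements agree at `y` if and only if they differ by an element of the stabilizer of `y`.

A globalization of a transitive partial action is transitive, since each of its points has the
form `β_k (i z)` and `z` lies in the orbit of the base point. Moreover `X` sits in `Y` as a
restriction of the global action, so a point keeps its anchor and its stabilizer when it is
regarded as a point of `Y`. The assertion is therefore the orbit-stabilizer theorem for `β` at
`i x`.
-/

namespace SetGroupoid

variable {G : Type u} (𝒢 : SetGroupoid G) {e g h k : G}

theorem d_r (g : G) : 𝒢.d (𝒢.r g) = 𝒢.r g := by
  rw [← 𝒢.d_inv, 𝒢.d_idem]

theorem inv_eq_self (he : 𝒢.d e = e) : 𝒢.inv e = e := by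
  have hr : 𝒢.r e = e := by simpa only [he] using 𝒢.r_d e
  calc 𝒢.inv e = 𝒢.mul (𝒢.inv e) (𝒢.d (𝒢.inv e)) := (𝒢.mul_d_self _).symm
    _ = 𝒢.mul (𝒢.inv e) e := by rw [𝒢.d_inv, hr]
    _ = e := by rw [𝒢.inv_mul, he]

theorem mul_inv_cancel_left (hr : 𝒢.r h = 𝒢.r g) : 𝒢.mul h (𝒢.mul (𝒢.inv h) g) = g := by
  rw [← 𝒢.mul_assoc h (𝒢.inv h) g (𝒢.r_inv h).symm ((𝒢.d_inv h).trans hr), 𝒢.mul_inv, hr,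
    𝒢.r_mul_self]

theorem inv_mul_cancel_left (hd : 𝒢.d g = 𝒢.r k) : 𝒢.mul (𝒢.inv g) (𝒢.mul g k) = k := by
  simpa only [𝒢.inv_inv] using 𝒢.mul_inv_cancel_left (h := 𝒢.inv g) ((𝒢.r_inv g).trans hd)

theorem eq_inv_of_mul_eq_r (hd : 𝒢.d g = 𝒢.r k) (hmul : 𝒢.mul g k = 𝒢.r g) :
    k = 𝒢.inv g := by
  rw [← 𝒢.inv_mul_cancel_left hd, hmul, ← 𝒢.d_inv, 𝒢.mul_d_self]

theorem mul_inv_rev (hd : 𝒢.d g = 𝒢.r h) :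
    𝒢.inv (𝒢.mul g h) = 𝒢.mul (𝒢.inv h) (𝒢.inv g) := by
  have hd' : 𝒢.d (𝒢.inv h) = 𝒢.r (𝒢.inv g) := by rw [𝒢.d_inv, 𝒢.r_inv, hd]
  have hr : 𝒢.d h = 𝒢.r (𝒢.mul (𝒢.inv h) (𝒢.inv g)) := by rw [𝒢.r_mul _ _ hd', 𝒢.r_inv]
  refine (𝒢.eq_inv_of_mul_eq_r ((𝒢.d_mul g h hd).trans hr) ?_).symm
  rw [𝒢.mul_assoc g h _ hd hr, 𝒢.mul_inv_cancel_left (hd.symm.trans (𝒢.r_inv g).symm),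
    𝒢.mul_inv, 𝒢.r_mul g h hd]

end SetGroupoid

namespace PartialAction

variable {G : Type u} {X : Type v} {𝒢 : SetGroupoid G} {α : PartialAction 𝒢 X} {g h : G} {x : X}

theorem r_eq_anchor (hx : x ∈ α.D g) : 𝒢.r g = α.anchor x :=
  α.anchor_unique x _ (𝒢.d_r g) (α.D_subset g hx)

theorem d_eq_anchor (hx : x ∈ α.D (𝒢.inv g)) : 𝒢.d g = α.anchor x :=
  (𝒢.r_inv g).symm.trans (r_eq_anchor hx)

theorem anchor_act (hx : x ∈ α.D (𝒢.inv g)) : α.anchor (α.act g x) = 𝒢.r g :=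
  (r_eq_anchor (α.act_mem g x hx)).symm

theorem Transitive.exists_act_eq (hα : α.Transitive) (x y : X) :
    ∃ g, x ∈ α.D (𝒢.inv g) ∧ α.act g x = y := by
  obtain ⟨x₀, hx₀⟩ := hα
  obtain ⟨a, ha, rfl⟩ := hx₀ x
  obtain ⟨b, hb, rfl⟩ := hx₀ y
  have hab : 𝒢.d a = 𝒢.d b := (d_eq_anchor ha).trans (d_eq_anchor hb).symm
  have hba : 𝒢.d b = 𝒢.r (𝒢.inv a) := hab.symm.trans (𝒢.r_inv a).symm
  have back : α.act (𝒢.inv a) (α.act a x₀) = x₀ := α.act_act a x₀ ha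
  refine ⟨𝒢.mul b (𝒢.inv a), ?_, ?_⟩
  · rw [𝒢.mul_inv_rev hba, 𝒢.inv_inv]
    exact α.act_comp_mem a (𝒢.inv b) (hab.trans (𝒢.r_inv b).symm) x₀ ha hb
  · have ha' : α.act a x₀ ∈ α.D (𝒢.inv (𝒢.inv a)) := (𝒢.inv_inv a).symm ▸ α.act_mem a x₀ ha
    rw [← α.act_comp b (𝒢.inv a) hba _ ha' (back.symm ▸ hb), back]

/-- The stabilizer `stab_α(x)` of a point. As `act` is totalized, lying in the domain `X_{g⁻¹}`
of `α_g` is a separate condition. -/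
def stabilizer (α : PartialAction 𝒢 X) (x : X) : Set G :=
  {g | x ∈ α.D (𝒢.inv g) ∧ α.act g x = x}

namespace IsGlobal

theorem mem_D_inv_iff (hα : α.IsGlobal) : x ∈ α.D (𝒢.inv g) ↔ 𝒢.d g = α.anchor x := by
  refine ⟨d_eq_anchor, fun hg => ?_⟩
  -- `g⁻¹ g` is an identity, so globality makes the domain of `α_g` all of `X_{d g}`.
  have hx : x ∈ α.D (𝒢.inv (𝒢.mul (𝒢.inv g) g)) := by
    rw [𝒢.inv_mul, 𝒢.inv_eq_self (𝒢.d_idem g), hg]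
    exact α.mem_anchor x
  exact (((hα (𝒢.inv g) g (𝒢.d_inv g)).1 x).1 hx).1

theorem mem_D_iff (hα : α.IsGlobal) : x ∈ α.D g ↔ 𝒢.r g = α.anchor x := by
  simpa only [𝒢.inv_inv, 𝒢.d_inv] using hα.mem_D_inv_iff (g := 𝒢.inv g) (x := x)

theorem act_mul (hα : α.IsGlobal) (hh : 𝒢.d h = α.anchor x) (hgh : 𝒢.d g = 𝒢.r h) :
    α.act (𝒢.mul g h) x = α.act g (α.act h x) :=
  (hα g h hgh).2 x (hα.mem_D_inv_iff.2 ((𝒢.d_mul g h hgh).trans hh))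

theorem act_eq_act_iff (hα : α.IsGlobal) (hg : 𝒢.d g = α.anchor x) (hh : 𝒢.d h = α.anchor x) :
    α.act g x = α.act h x ↔ 𝒢.r g = 𝒢.r h ∧ 𝒢.mul (𝒢.inv h) g ∈ α.stabilizer x := by
  have hgx : x ∈ α.D (𝒢.inv g) := hα.mem_D_inv_iff.2 hg
  have hhx : x ∈ α.D (𝒢.inv h) := hα.mem_D_inv_iff.2 hh
  constructor
  · intro heq
    have hr : 𝒢.r g = 𝒢.r h := by rw [← anchor_act hgx, ← anchor_act hhx, heq]
    have hd : 𝒢.d (𝒢.inv h) = 𝒢.r g := (𝒢.d_inv h).trans hr.symm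
    refine ⟨hr, hα.mem_D_inv_iff.2 ((𝒢.d_mul _ _ hd).trans hg), ?_⟩
    rw [hα.act_mul hg hd, heq, α.act_act h x hhx]
  · rintro ⟨hr, hmem, hfix⟩
    have hd : 𝒢.d (𝒢.inv h) = 𝒢.r g := (𝒢.d_inv h).trans hr.symm
    have hd' : 𝒢.d h = 𝒢.r (𝒢.mul (𝒢.inv h) g) := by rw [𝒢.r_mul _ _ hd, 𝒢.r_inv]
    calc α.act g x = α.act (𝒢.mul h (𝒢.mul (𝒢.inv h) g)) x := by
          rw [𝒢.mul_inv_cancel_left hr.symm]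
      _ = α.act h x := by rw [hα.act_mul (d_eq_anchor hmem) hd', hfix]

theorem D_eq_setOf_act (hα : α.IsGlobal) (htrans : α.Transitive) (x : X) (g : G) :
    α.D g = {y | ∃ h, 𝒢.d h = α.anchor x ∧ 𝒢.r h = 𝒢.r g ∧ y = α.act h x} := by
  ext y
  rw [hα.mem_D_iff]
  constructor
  · intro hy
    obtain ⟨h, hx, rfl⟩ := htrans.exists_act_eq x y
    exact ⟨h, d_eq_anchor hx, (hy.trans (anchor_act hx)).symm, rfl⟩
  · rintro ⟨h, hd, hr, rfl⟩
    rw [anchor_act (hα.mem_D_inv_iff.2 hd), hr]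

end IsGlobal

end PartialAction

namespace IsGlobalization

open PartialAction

variable {G : Type u} {X : Type v} {Y : Type w} {𝒢 : SetGroupoid G} {α : PartialAction 𝒢 X}
  {β : PartialAction 𝒢 Y} {i : X → Y}

theorem mem_D_inv_iff (h : IsGlobalization α β i) {g : G} {x : X} :
    x ∈ α.D (𝒢.inv g) ↔ i x ∈ β.D (𝒢.inv g) ∧ β.act g (i x) ∈ Set.range i := by
  rw [← h.inj.mem_set_image, h.cond_i, 𝒢.inv_inv]
  constructor
  · rintro ⟨-, y, ⟨hy, hyD⟩, hyx⟩
    rw [← 𝒢.inv_inv g] at hyD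
    have hact : β.act g (i x) = y := by
      simpa only [𝒢.inv_inv, hyx] using β.act_act (𝒢.inv g) y hyD
    exact ⟨hyx ▸ β.act_mem (𝒢.inv g) y hyD, hact.symm ▸ hy⟩
  · rintro ⟨hxD, hact⟩
    exact ⟨⟨x, rfl⟩, β.act g (i x), ⟨hact, β.act_mem g _ hxD⟩, β.act_act g _ hxD⟩

theorem anchor_map (h : IsGlobalization α β i) (x : X) : β.anchor (i x) = α.anchor x := by
  have hx : x ∈ α.D (𝒢.inv (α.anchor x)) := by
    rw [𝒢.inv_eq_self (α.anchor_isUnit x)]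
    exact α.mem_anchor x
  exact (d_eq_anchor (h.mem_D_inv_iff.1 hx).1).symm.trans (α.anchor_isUnit x)

theorem stabilizer_map (h : IsGlobalization α β i) (x : X) :
    β.stabilizer (i x) = α.stabilizer x := by
  ext g
  constructor
  · rintro ⟨hmem, hfix⟩
    have hx : x ∈ α.D (𝒢.inv g) := h.mem_D_inv_iff.2 ⟨hmem, x, hfix.symm⟩
    exact ⟨hx, h.inj ((h.cond_ii g x hx).symm.trans hfix)⟩
  · rintro ⟨hmem, hfix⟩
    exact ⟨(h.mem_D_inv_iff.1 hmem).1, (h.cond_ii g x hmem).trans (congrArg i hfix)⟩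

theorem exists_eq_act_map (h : IsGlobalization α β i) (y : Y) :
    ∃ k z, 𝒢.d k = α.anchor z ∧ y = β.act k (i z) := by
  have hy := β.mem_anchor y
  simp only [h.cond_iii, Set.mem_iUnion] at hy
  obtain ⟨k, -, -, ⟨z, hz, rfl⟩, rfl⟩ := hy
  exact ⟨k, z, (𝒢.r_d k).symm.trans (r_eq_anchor hz), rfl⟩

theorem transitive (h : IsGlobalization α β i) (htrans : α.Transitive) : β.Transitive := by
  obtain ⟨x, hx⟩ := htrans
  refine ⟨i x, fun y => ?_⟩
  obtain ⟨k, z, hk, rfl⟩ := h.exists_eq_act_map y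
  obtain ⟨g, hg, rfl⟩ := hx z
  have hkg : 𝒢.d k = 𝒢.r g := hk.trans (anchor_act hg)
  have hgx : 𝒢.d g = β.anchor (i x) := (d_eq_anchor hg).trans (h.anchor_map x).symm
  refine ⟨𝒢.mul k g, h.global.mem_D_inv_iff.2 ((𝒢.d_mul k g hkg).trans hgx), ?_⟩
  rw [h.global.act_mul hgx hkg, h.cond_ii g x hg]

end IsGlobalization

/-- Let `α` be a transitive partial action of a groupoid `G` on `X`,
`x ∈ X`, and let the global action `β` on `Y` be a globalization of `α` via `i`.
Consider `H^x = {h : d h = p x}` with the equivalence `h₁ ∼ h₂ ↔ r h₁ = r h₂ ∧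
h₂⁻¹ h₁ ∈ stab_α(x)`, and the left-translation action `δ` of `G` on the quotient
`H̄^x` (with `(H̄^x)_g = {h̄ : r h = r g}`, `δ_g h̄ = (g h)‾`).  Then
`φ : H̄^x → Y`, `φ(h̄) = β_h(i x)`, is a well-defined bijection which is an
isomorphism between `δ` and `β`.  (The statement below unfolds all conditions on the
quotient `H̄^x` to conditions on representatives in `H^x`.) -/
theorem globalization_iso_coset_action {G : Type u} {X : Type v} {Y : Type w}
    {𝒢 : SetGroupoid G} (α : PartialAction 𝒢 X) (htrans : α.Transitive) (x : X)
    (β : PartialAction 𝒢 Y) (i : X → Y) (h : IsGlobalization α β i) :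
    -- φ is well defined on the quotient H̄^x
    (∀ h₁ h₂ : G, 𝒢.d h₁ = α.anchor x → 𝒢.d h₂ = α.anchor x →
      𝒢.r h₁ = 𝒢.r h₂ →
      (x ∈ α.D (𝒢.inv (𝒢.mul (𝒢.inv h₂) h₁)) ∧ α.act (𝒢.mul (𝒢.inv h₂) h₁) x = x) →
      β.act h₁ (i x) = β.act h₂ (i x)) ∧
    -- φ is injective on the quotient H̄^x
    (∀ h₁ h₂ : G, 𝒢.d h₁ = α.anchor x → 𝒢.d h₂ = α.anchor x →
      β.act h₁ (i x) = β.act h₂ (i x) →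
      (𝒢.r h₁ = 𝒢.r h₂ ∧
        x ∈ α.D (𝒢.inv (𝒢.mul (𝒢.inv h₂) h₁)) ∧ α.act (𝒢.mul (𝒢.inv h₂) h₁) x = x)) ∧
    -- φ is surjective onto Y
    (∀ y : Y, ∃ h : G, 𝒢.d h = α.anchor x ∧ y = β.act h (i x)) ∧
    -- φ maps (H̄^x)_g onto Y_g, for every g
    (∀ g : G, β.D g = {y : Y | ∃ h : G, 𝒢.d h = α.anchor x ∧ 𝒢.r h = 𝒢.r g ∧
        y = β.act h (i x)}) ∧
    -- φ is equivariant: φ (δ_g h̄) = β_g (φ h̄)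
    (∀ g h : G, 𝒢.d h = α.anchor x → 𝒢.d g = 𝒢.r h →
      β.act (𝒢.mul g h) (i x) = β.act g (β.act h (i x))) := by
  have hβ : β.IsGlobal := h.global
  have hβt : β.Transitive := h.transitive htrans
  rw [← h.anchor_map x]
  have hfiber : ∀ h₁ h₂ : G, 𝒢.d h₁ = β.anchor (i x) → 𝒢.d h₂ = β.anchor (i x) →
      (β.act h₁ (i x) = β.act h₂ (i x) ↔
        𝒢.r h₁ = 𝒢.r h₂ ∧ 𝒢.mul (𝒢.inv h₂) h₁ ∈ α.stabilizer x) := fun h₁ h₂ hd₁ hd₂ =>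
    h.stabilizer_map x ▸ hβ.act_eq_act_iff hd₁ hd₂
  refine ⟨fun h₁ h₂ hd₁ hd₂ hr hstab => (hfiber h₁ h₂ hd₁ hd₂).2 ⟨hr, hstab⟩,
    fun h₁ h₂ hd₁ hd₂ => (hfiber h₁ h₂ hd₁ hd₂).1, fun y => ?_,
    hβ.D_eq_setOf_act hβt (i x), fun _ _ => hβ.act_mul⟩
  obtain ⟨g, hg, hgy⟩ := hβt.exists_act_eq (i x) y
  exact ⟨g, PartialAction.d_eq_anchor hg, hgy.symm⟩
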